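/- arXiv:1507.00081 — 2 statements merged into one kernel-verified Lean document; each statement's English description precedes it below -/
import Mathlib

section
/- Let H₁ and H₂ be Cartan subalgebras of sl(n, ℂ) that are orthogonal with respect to the trace form, and let p₁,...,p_n and q₁,...,q_n be the associated complete systems of rank 1 orthogonal projectors (i.e., the minimal projectors in the span of H_i and the identity). Then Tr(p_i q_j) = 1/n for all i, j. Conversely, given two complete systems of rank 1 orthogonal projectors with Tr(p_i q_j) = 1/n for all i, j, their traceless parts p_i − (1/n)·id and q_j − (1/n)·id span orthogonal Cartan subalgebras. -/
open LieAlgebra.SpecialLinear Matrix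

/-- A complete system of minimal orthogonal projectors in `gl(n, ℂ)`:
rank 1 idempotents, pairwise orthogonal, summing to the identity. -/
def IsCompleteSystem {n : ℕ} (p : Fin n → Matrix (Fin n) (Fin n) ℂ) : Prop :=
  (∀ i, p i * p i = p i) ∧ (∀ i, (p i).rank = 1) ∧
    (∀ i j, i ≠ j → p i * p j = 0) ∧ (∑ i, p i = 1)

/-- Two subalgebras (or subsets) of `sl(n, ℂ)` are orthogonal with respect to the
Killing/trace form. -/
def OrthogonalSubalgebras {n : ℕ} (H₁ H₂ : LieSubalgebra ℂ ↥(sl (Fin n) ℂ)) : Prop :=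
  ∀ x ∈ H₁, ∀ y ∈ H₂,
    (((x : ↥(sl (Fin n) ℂ)) : Matrix (Fin n) (Fin n) ℂ) *
      ((y : ↥(sl (Fin n) ℂ)) : Matrix (Fin n) (Fin n) ℂ)).trace = 0

lemma rank_one_factor {n : ℕ} (p : Matrix (Fin n) (Fin n) ℂ) (h : p.rank = 1) :
    ∃ u v : Fin n → ℂ, p = vecMulVec u v := by
  unfold Matrix.rank at h
  obtain ⟨⟨u, hu⟩, -, hw⟩ := finrank_eq_one_iff'.1 h
  have : ∀ j, ∃ c : ℂ, c • u = p.col j := by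
    intro j
    obtain ⟨c, hc⟩ := hw ⟨p.mulVecLin (Pi.single j 1), LinearMap.mem_range_self _ _⟩
    refine ⟨c, ?_⟩
    have := congrArg Subtype.val hc
    simpa using this
  choose v hv using this
  refine ⟨u, v, ?_⟩
  ext i j
  have := congrFun (hv j) i
  simp only [Pi.smul_apply, smul_eq_mul, Matrix.col_apply] at this
  rw [vecMulVec_apply, ← this, mul_comm]

lemma rank_one_sandwich {n : ℕ} (p x : Matrix (Fin n) (Fin n) ℂ) (h : p.rank = 1) :
    ∃ c : ℂ, p * x * p = c • p := by
  obtain ⟨u, v, rfl⟩ := rank_one_factor p h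
  refine ⟨(v ᵥ* x) ⬝ᵥ u, ?_⟩
  rw [vecMulVec_mul, vecMulVec_mul_vecMulVec, vecMulVec_smul]

/-- The centralizer in sl(n) of a family of matrices. -/
def centSub {n : ℕ} (p : Fin n → Matrix (Fin n) (Fin n) ℂ) :
    LieSubalgebra ℂ ↥(sl (Fin n) ℂ) where
  carrier := {x | ∀ i, x.1 * p i = p i * x.1}
  add_mem' := by
    intro a b ha hb i
    have h1 := ha i
    have h2 := hb i
    change (a.1 + b.1) * p i = p i * (a.1 + b.1)
    rw [add_mul, mul_add, h1, h2]
  zero_mem' := by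
    intro i
    simp
  smul_mem' := by
    intro c a ha i
    have h1 := ha i
    change (c • a.1) * p i = p i * (c • a.1)
    rw [smul_mul_assoc, mul_smul_comm, h1]
  lie_mem' := by
    intro a b ha hb i
    have h1 := ha i
    have h2 := hb i
    rw [sl_bracket, sub_mul, mul_sub, mul_assoc, h2, ← mul_assoc, h1, mul_assoc b.1, h1,
      ← mul_assoc, h2, mul_assoc, mul_assoc]

lemma mem_centSub {n : ℕ} {p : Fin n → Matrix (Fin n) (Fin n) ℂ} {x : ↥(sl (Fin n) ℂ)} :
    x ∈ centSub p ↔ ∀ i, x.1 * p i = p i * x.1 := Iff.rfl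

lemma mem_sl_iff {n : ℕ} (x : Matrix (Fin n) (Fin n) ℂ) :
    x ∈ sl (Fin n) ℂ ↔ x.trace = 0 := Iff.rfl

lemma system_comm {n : ℕ} {p : Fin n → Matrix (Fin n) (Fin n) ℂ} (hp : IsCompleteSystem p)
    (i j : Fin n) : p i * p j = p j * p i := by
  by_cases h : i = j
  · rw [h]
  · rw [hp.2.2.1 i j h, hp.2.2.1 j i (Ne.symm h)]

lemma centSub_coeff {n : ℕ} {p : Fin n → Matrix (Fin n) (Fin n) ℂ} (hp : IsCompleteSystem p)
    (ht : ∀ i, (p i).trace = 1) {x : ↥(sl (Fin n) ℂ)} (hx : x ∈ centSub p) :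
    ∃ c : Fin n → ℂ, ∑ i, c i = 0 ∧ x.1 = ∑ i, c i • p i := by
  choose c hc using fun i => rank_one_sandwich (p i) x.1 (hp.2.1 i)
  have hxe : x.1 = ∑ i, c i • p i := by
    calc x.1 = x.1 * ∑ i, p i := by rw [hp.2.2.2, mul_one]
      _ = ∑ i, c i • p i := by
        rw [Finset.mul_sum]
        refine Finset.sum_congr rfl fun i _ => ?_
        rw [← hc i, ← hx i, mul_assoc, hp.1 i]
  refine ⟨c, ?_, hxe⟩
  have h0 : x.1.trace = 0 := (mem_sl_iff _).1 x.2
  rw [hxe, trace_sum] at h0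
  simpa [ht] using h0

lemma shift_trace {n : ℕ} (hn : 0 < n) {a : Matrix (Fin n) (Fin n) ℂ} (ht : a.trace = 1) :
    a - (n : ℂ)⁻¹ • (1 : Matrix (Fin n) (Fin n) ℂ) ∈ sl (Fin n) ℂ := by
  have : (n : ℂ) ≠ 0 := by exact_mod_cast hn.ne'
  rw [mem_sl_iff]
  simp [ht, this]

lemma shift_mem {n : ℕ} (hn : 0 < n) {p : Fin n → Matrix (Fin n) (Fin n) ℂ}
    (hp : IsCompleteSystem p) (ht : ∀ i, (p i).trace = 1) (i : Fin n) :
    (⟨_, shift_trace hn (ht i)⟩ : ↥(sl (Fin n) ℂ)) ∈ centSub p := by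
  intro j
  simp [sub_mul, mul_sub, system_comm hp i j]

lemma centSub_cartan {n : ℕ} (hn : 0 < n) {p : Fin n → Matrix (Fin n) (Fin n) ℂ}
    (hp : IsCompleteSystem p) (ht : ∀ i, (p i).trace = 1) :
    (centSub p).IsCartanSubalgebra := by
  have hab : IsLieAbelian (centSub p) := by
    refine ⟨fun a b => ?_⟩
    apply Subtype.ext
    apply Subtype.ext
    obtain ⟨c, -, hc⟩ := centSub_coeff hp ht b.2
    have ha : ∀ i, a.1.1 * p i = p i * a.1.1 := a.2
    change a.1.1 * b.1.1 - b.1.1 * a.1.1 = 0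
    rw [hc, Finset.mul_sum, Finset.sum_mul, sub_eq_zero]
    refine Finset.sum_congr rfl fun i _ => ?_
    rw [mul_smul_comm, smul_mul_assoc, ha i]
  refine ⟨inferInstance, le_antisymm ?_ (LieSubalgebra.le_normalizer _)⟩
  intro x hx i
  rw [LieSubalgebra.mem_normalizer_iff] at hx
  have h := hx _ (shift_mem hn hp ht i) i
  have hpp := hp.1 i
  rw [sl_bracket] at h
  simp only [mul_sub, sub_mul, mul_smul_comm, smul_mul_assoc, mul_one, one_mul] at h
  generalize x.1 = y at *
  generalize p i = e at *
  have h' : y * e - e * y * e - (e * y * e - e * y) = 0 := by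
    have e1 : y * e * e = y * e := by rw [mul_assoc, hpp]
    have e2 : e * (e * y) = e * y := by rw [← mul_assoc, hpp]
    have e3 : e * (y * e) = e * y * e := by rw [mul_assoc]
    rw [e1, e2, e3] at h
    rw [← sub_eq_zero] at h
    rw [← h]
    abel
  have hl : e * y = e * y * e := by
    have := congrArg (e * ·) h'
    simp only [mul_sub, mul_zero, ← mul_assoc, hpp] at this
    rw [sub_self, zero_sub, neg_eq_zero, sub_eq_zero] at this
    exact this.symm
  have hr : y * e = e * y * e := by
    rw [← hl, sub_self, sub_zero, sub_eq_zero] at h'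
    rw [h', ← hl]
  rw [hr, ← hl]

lemma centSub_image {n : ℕ} (hn : 0 < n) {p : Fin n → Matrix (Fin n) (Fin n) ℂ}
    (hp : IsCompleteSystem p) (ht : ∀ i, (p i).trace = 1) :
    (fun (x : ↥(sl (Fin n) ℂ)) => (x : Matrix (Fin n) (Fin n) ℂ)) '' (centSub p : Set _)
      = ↑(Submodule.span ℂ
        (Set.range fun i => p i - (n : ℂ)⁻¹ • (1 : Matrix (Fin n) (Fin n) ℂ))) := by
  apply Set.Subset.antisymm
  · rintro _ ⟨x, hx, rfl⟩
    obtain ⟨c, h0, hc⟩ := centSub_coeff hp ht hx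
    have : x.1 = ∑ i, c i • (p i - (n : ℂ)⁻¹ • (1 : Matrix (Fin n) (Fin n) ℂ)) := by
      simp only [smul_sub, Finset.sum_sub_distrib, ← Finset.sum_smul, h0, zero_smul, sub_zero, hc]
    change x.1 ∈ Submodule.span ℂ _
    rw [this]
    exact Submodule.sum_mem _ fun i _ => Submodule.smul_mem _ _ (Submodule.subset_span ⟨i, rfl⟩)
  · intro x hx
    obtain ⟨c, rfl⟩ := (Submodule.mem_span_range_iff_exists_fun ℂ).1 hx
    refine ⟨⟨∑ i, c i • (p i - (n : ℂ)⁻¹ • (1 : Matrix (Fin n) (Fin n) ℂ)),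
      (mem_sl_iff _).2 ?_⟩, ?_, rfl⟩
    · rw [trace_sum]
      refine Finset.sum_eq_zero fun i _ => ?_
      rw [trace_smul, (mem_sl_iff _).1 (shift_trace hn (ht i)), smul_zero]
    · intro j
      rw [Finset.sum_mul, Finset.mul_sum]
      refine Finset.sum_congr rfl fun i _ => ?_
      rw [smul_mul_assoc, mul_smul_comm]
      exact congrArg _ (shift_mem hn hp ht i j)

theorem orthogonal_cartan_iff_unbiased (n : ℕ) (hn : 0 < n) :
    -- orthogonal Cartan subalgebras yield algebraically unbiased systems
    (∀ (H₁ H₂ : LieSubalgebra ℂ ↥(sl (Fin n) ℂ)),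
      H₁.IsCartanSubalgebra → H₂.IsCartanSubalgebra →
      OrthogonalSubalgebras H₁ H₂ →
      ∀ (p q : Fin n → Matrix (Fin n) (Fin n) ℂ),
        IsCompleteSystem p → IsCompleteSystem q →
        (∀ i, ∃ h ∈ H₁, ((h : ↥(sl (Fin n) ℂ)) : Matrix (Fin n) (Fin n) ℂ)
            = p i - (n : ℂ)⁻¹ • (1 : Matrix (Fin n) (Fin n) ℂ)) →
        (∀ j, ∃ h ∈ H₂, ((h : ↥(sl (Fin n) ℂ)) : Matrix (Fin n) (Fin n) ℂ)
            = q j - (n : ℂ)⁻¹ • (1 : Matrix (Fin n) (Fin n) ℂ)) →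
        ∀ i j, (p i * q j).trace = (n : ℂ)⁻¹) ∧
    -- conversely, unbiased systems span orthogonal Cartan subalgebras
    (∀ (p q : Fin n → Matrix (Fin n) (Fin n) ℂ),
      IsCompleteSystem p → IsCompleteSystem q →
      (∀ i j, (p i * q j).trace = (n : ℂ)⁻¹) →
      ∃ (H₁ H₂ : LieSubalgebra ℂ ↥(sl (Fin n) ℂ)),
        H₁.IsCartanSubalgebra ∧ H₂.IsCartanSubalgebra ∧
        OrthogonalSubalgebras H₁ H₂ ∧
        (fun (x : ↥(sl (Fin n) ℂ)) => (x : Matrix (Fin n) (Fin n) ℂ)) '' (H₁ : Set _)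
          = ↑(Submodule.span ℂ
              (Set.range fun i => p i - (n : ℂ)⁻¹ • (1 : Matrix (Fin n) (Fin n) ℂ))) ∧
        (fun (x : ↥(sl (Fin n) ℂ)) => (x : Matrix (Fin n) (Fin n) ℂ)) '' (H₂ : Set _)
          = ↑(Submodule.span ℂ
              (Set.range fun j => q j - (n : ℂ)⁻¹ • (1 : Matrix (Fin n) (Fin n) ℂ)))) := by
  have hn' : (n : ℂ) ≠ 0 := by exact_mod_cast hn.ne'
  constructor
  · intro H₁ H₂ _ _ ho p q _ _ h1 h2 i j
    obtain ⟨a, ha, hae⟩ := h1 i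
    obtain ⟨b, hb, hbe⟩ := h2 j
    have h := ho a ha b hb
    have ta : a.1.trace = 0 := (mem_sl_iff _).1 a.2
    have tb : b.1.trace = 0 := (mem_sl_iff _).1 b.2
    have hp : p i = a.1 + (n : ℂ)⁻¹ • (1 : Matrix (Fin n) (Fin n) ℂ) := by rw [hae]; abel
    have hq : q j = b.1 + (n : ℂ)⁻¹ • (1 : Matrix (Fin n) (Fin n) ℂ) := by rw [hbe]; abel
    rw [hp, hq]
    simp only [add_mul, mul_add, smul_mul_assoc, mul_smul_comm, mul_one, one_mul, trace_add,
      trace_smul, h, ta, tb, trace_one, Fintype.card_fin, smul_eq_mul]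
    field_simp
    simp
  · intro p q hp hq h
    have tp : ∀ i, (p i).trace = 1 := by
      intro i
      rw [← mul_one (p i), ← hq.2.2.2, Finset.mul_sum, trace_sum]
      simp [h, hn']
    have tq : ∀ i, (q i).trace = 1 := by
      intro i
      rw [← one_mul (q i), ← hp.2.2.2, Finset.sum_mul, trace_sum]
      simp [h, hn']
    refine ⟨centSub p, centSub q, centSub_cartan hn hp tp, centSub_cartan hn hq tq, ?_,
      centSub_image hn hp tp, centSub_image hn hq tq⟩
    intro x hx y hy
    obtain ⟨c, hc0, hc⟩ := centSub_coeff hp tp hx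
    obtain ⟨d, hd0, hd⟩ := centSub_coeff hq tq hy
    rw [hc, hd, Finset.sum_mul, trace_sum]
    refine Finset.sum_eq_zero fun i _ => ?_
    rw [Finset.mul_sum, trace_sum]
    simp only [smul_mul_assoc, mul_smul_comm, trace_smul, h, smul_eq_mul]
    rw [← Finset.sum_mul, hd0, zero_mul]
end

section
/- The only matrices in the Birkhoff polytope B_n whose entries all lie in (1/n)·ℤ and that belong to the lattice generated by integer matrices together with the matrix Λ₀ (all of whose entries are 1/n) are the permutation matrices and Λ₀ itself. -/
open Matrix

theorem lattice_points_of_birkhoff (n : ℕ) (hn : 0 < n)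
    (Lam0 : Matrix (Fin n) (Fin n) ℝ) (hLam0 : ∀ i j, Lam0 i j = (n : ℝ)⁻¹)
    (N : AddSubgroup (Matrix (Fin n) (Fin n) ℝ))
    (hN : N = AddSubgroup.closure
        ({M : Matrix (Fin n) (Fin n) ℝ | ∀ i j, ∃ z : ℤ, M i j = (z : ℝ)} ∪ {Lam0}))
    (M : Matrix (Fin n) (Fin n) ℝ)
    (hM : M ∈ doublyStochastic ℝ (Fin n))
    (hMent : ∀ i j, ∃ z : ℤ, M i j = (z : ℝ) / n)
    (hMN : M ∈ N) :
    (∃ σ : Equiv.Perm (Fin n), M = σ.permMatrix ℝ) ∨ M = Lam0 := by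
  have hD : ∀ i j i' j', ∃ z : ℤ, M i j - M i' j' = (z : ℝ) := by
    rw [hN] at hMN
    clear hMent hM
    induction hMN using AddSubgroup.closure_induction with
    | mem x hx =>
      intro i j i' j'
      rcases hx with hx | hx
      · obtain ⟨a, ha⟩ := hx i j
        obtain ⟨b, hb⟩ := hx i' j'
        exact ⟨a - b, by rw [ha, hb]; push_cast; rfl⟩
      · rw [Set.mem_singleton_iff] at hx
        exact ⟨0, by rw [hx, hLam0, hLam0]; simp⟩
    | zero => intro i j i' j'; exact ⟨0, by simp⟩
    | add x y _ _ hx hy =>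
      intro i j i' j'
      obtain ⟨a, ha⟩ := hx i j i' j'
      obtain ⟨b, hb⟩ := hy i j i' j'
      exact ⟨a + b, by simp only [Matrix.add_apply]; push_cast; linarith⟩
    | neg x _ hx =>
      intro i j i' j'
      obtain ⟨a, ha⟩ := hx i j i' j'
      exact ⟨-a, by simp only [Matrix.neg_apply]; push_cast; linarith⟩
  obtain ⟨h0, hr, hc⟩ := mem_doublyStochastic_iff_sum.1 hM
  have h1 : ∀ i j, M i j ≤ 1 := fun i j => le_one_of_mem_doublyStochastic hM
  by_cases hall : ∀ i j, M i j = 0 ∨ M i j = 1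
  · left
    have hex : ∀ i, ∃ j, M i j = 1 := by
      intro i
      by_contra hne
      push Not at hne
      have : ∑ j, M i j = 0 :=
        Finset.sum_eq_zero fun j _ => (hall i j).resolve_right (hne j)
      rw [hr i] at this
      exact one_ne_zero this
    choose f hf using hex
    have hinj : Function.Injective f := by
      intro i i' h
      by_contra hne
      have h2 := Finset.add_le_sum (f := fun k => M k (f i)) (s := Finset.univ)
        (fun k _ => h0 k (f i)) (Finset.mem_univ i) (Finset.mem_univ i') hne
      have h3 := hf i'
      rw [← h] at h3
      simp only [hc, hf i, h3] at h2
      linarith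
    refine ⟨Equiv.ofBijective f (Finite.injective_iff_bijective.1 hinj), ?_⟩
    ext i j
    rw [Equiv.Perm.permMatrix, PEquiv.toMatrix_toPEquiv_apply, Pi.single_apply]
    simp only [Equiv.ofBijective_apply]
    split_ifs with h
    · rw [h]; exact hf i
    · rcases hall i j with h' | h'
      · exact h'
      · have h2 := Finset.add_le_sum (f := fun k => M i k) (s := Finset.univ)
          (fun k _ => h0 i k) (Finset.mem_univ (f i)) (Finset.mem_univ j) (Ne.symm h)
        simp only [hr, hf i, h'] at h2
        linarith
  · right
    push Not at hall
    obtain ⟨a, b, hab0, hab1⟩ := hall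
    have p0 : 0 < M a b := lt_of_le_of_ne (h0 a b) (Ne.symm hab0)
    have p1 : M a b < 1 := lt_of_le_of_ne (h1 a b) hab1
    have heq : ∀ i j, M i j = M a b := by
      intro i j
      obtain ⟨z, hz⟩ := hD i j a b
      have l1 : (-1 : ℝ) < z := by linarith [h0 i j]
      have l2 : (z : ℝ) < 1 := by linarith [h1 i j]
      have l1' : -1 < z := by exact_mod_cast l1
      have l2' : z < 1 := by exact_mod_cast l2
      have hz0 : z = 0 := by omega
      rw [hz0] at hz
      push_cast at hz
      linarith
    ext i j
    have hs := hr i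
    simp only [heq i] at hs
    rw [Finset.sum_const, Finset.card_univ, Fintype.card_fin, nsmul_eq_mul] at hs
    rw [hLam0, heq]
    exact eq_inv_of_mul_eq_one_right hs
end
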